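/- For every p ≥ 0 there exists a decomposition of the complete tripartite graph K_{2,4p+1,4p+1} into p+1 planar subgraphs; in particular θ(K_{2,4p+1,4p+1}) ≤ p+1. -/

import Mathlib

open SimpleGraph

/-- A simple graph is planar if it admits a drawing in the plane: an injective
placement of vertices and, for each edge, an injective continuous arc joining
the images of its endpoints, such that arcs avoid vertex images in their
interiors and distinct arcs meet only at vertex images. -/
def IsPlanar {V : Type*} (G : SimpleGraph V) : Prop :=
  ∃ (f : V → ℝ × ℝ) (γ : G.edgeSet → (Set.Icc (0:ℝ) 1 → ℝ × ℝ)),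
    Function.Injective f ∧
    (∀ e : G.edgeSet, Continuous (γ e)) ∧
    (∀ e : G.edgeSet, ∃ u v : V, (e : Sym2 V) = s(u, v) ∧
      γ e ⟨0, by norm_num⟩ = f u ∧ γ e ⟨1, by norm_num⟩ = f v) ∧
    (∀ e : G.edgeSet, Function.Injective (γ e)) ∧
    (∀ e : G.edgeSet, ∀ t : Set.Icc (0:ℝ) 1, (t : ℝ) ≠ 0 → (t : ℝ) ≠ 1 →
      ∀ v : V, γ e t ≠ f v) ∧
    (∀ e e' : G.edgeSet, e ≠ e' → ∀ s t : Set.Icc (0:ℝ) 1,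
      γ e s = γ e' t → γ e s ∈ Set.range f)

/-- The thickness of a graph: the least `n` such that `G` is the union of `n`
planar subgraphs. -/
noncomputable def thickness {V : Type*} (G : SimpleGraph V) : ℕ :=
  sInf {n : ℕ | ∃ H : Fin n → SimpleGraph V,
    (∀ i, H i ≤ G) ∧ (∀ i, IsPlanar (H i)) ∧ (⨆ i, H i) = G}

/-!
A graph whose vertices lie on the real axis is planar as soon as its edges split into two pages, one
drawn by half circles above the axis and one below, such that no two edges on the same page
interleave.

Split each large side into a last vertex and `p` quadruples. The layer of a quadruple `r` joins its
eight vertices to most of the graph. On the spine, the remaining vertices only matter up to the few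
classes they are grouped in, so the layer is a blow-up of a fixed graph on 17 sites, and whether its
edges interleave is a finite check that does not depend on `p`. One further layer collects the edges
left over: a blow-up of a graph on 11 sites, together with, for each quadruple `j`, the 4-cycle on
the members `0` and `1` of both sides. On the spine these four vertices are consecutive, in the
order `u 0 j`, `v 0 j`, `v 1 j`, `u 1 j`. The edges at `v 0 j` go above the axis and those at
`v 1 j` below, so the only vertex strictly between the ends of one of them carries no edge on its
page.
-/

/-! ### Two-page drawings -/

/-- No edges `ab` and `cd` of `G` have `a` before `c` before `b` before `d`. When `before` is the
order of the vertices along the spine of a book, this says that `G` can be drawn on a single page;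
when it is the relation "some copy comes before some copy" between the sites of a template, it says
that every blow-up of `G` can. -/
def NonCrossing {V : Type*} (before : V → V → Prop) (G : SimpleGraph V) : Prop :=
  ∀ ⦃a b⦄, G.Adj a b → ∀ ⦃c d⦄, G.Adj c d → before a c → before c b → ¬ before b d

namespace NonCrossing

variable {V S : Type*}

theorem comap {before : V → V → Prop} {before' : S → S → Prop} {G : SimpleGraph S} {f : V → S}
    (hf : ∀ x y, before x y → before' (f x) (f y)) (hG : NonCrossing before' G) :
    NonCrossing before (G.comap f) :=
  fun _ _ hab _ _ hcd hac hcb hbd => hG hab hcd (hf _ _ hac) (hf _ _ hcb) (hf _ _ hbd)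

theorem sup_of_isolated_between {before : V → V → Prop} {G H : SimpleGraph V}
    (hG : NonCrossing before G)
    (hH : ∀ ⦃a b c⦄, H.Adj a b → before a c → before c b → ∀ d, ¬ (G ⊔ H).Adj c d) :
    NonCrossing before (G ⊔ H) := by
  intro a b hab c d hcd hac hcb hbd
  rcases hab with habG | habH
  · rcases hcd with hcdG | hcdH
    · exact hG habG hcdG hac hcb hbd
    · exact hH hcdH hcb hbd a (Or.inl habG.symm)
  · exact hH habH hac hcb d hcd

end NonCrossing

/-- The half circle above (`upper = true`) or below the segment from `a` to `b` of the real axis,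
parametrized so that the first coordinate is affine. -/
noncomputable def semicircle (upper : Bool) (a b t : ℝ) : ℝ × ℝ :=
  (AffineMap.lineMap a b t,
    cond upper 1 (-1) * √((AffineMap.lineMap a b t - a) * (b - AffineMap.lineMap a b t)))

section Semicircle

variable {upper upper' : Bool} {a b c d s t : ℝ}

theorem continuous_semicircle : Continuous (semicircle upper a b) := by
  unfold semicircle
  fun_prop

theorem semicircle_zero : semicircle upper a b 0 = (a, 0) := by
  simp [semicircle]

theorem semicircle_one : semicircle upper a b 1 = (b, 0) := by
  simp [semicircle]

theorem semicircle_injective (hab : a ≠ b) : Function.Injective (semicircle upper a b) :=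
  fun _ _ h => AffineMap.lineMap_injective ℝ hab (congrArg Prod.fst h)

theorem semicircle_spec (hab : a < b) (ht : t ∈ Set.Ioo 0 1) {x y : ℝ}
    (h : semicircle upper a b t = (x, y)) :
    x ∈ Set.Ioo a b ∧ 0 < cond upper 1 (-1) * y ∧ y ^ 2 = (x - a) * (b - x) := by
  obtain ⟨rfl, rfl⟩ := Prod.mk.inj h
  set x := AffineMap.lineMap a b t
  have hax : a < x := (left_lt_lineMap_iff_lt ht.1).2 hab
  have hxb : x < b := (lineMap_lt_right_iff_lt ht.2).2 hab
  have hpos : 0 < (x - a) * (b - x) := mul_pos (sub_pos.2 hax) (sub_pos.2 hxb)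
  refine ⟨⟨hax, hxb⟩, ?_, ?_⟩
  · cases upper <;> simpa using hpos
  · cases upper <;> simp [Real.sq_sqrt hpos.le]

theorem eq_or_interleaved_of_semicircles_meet (hab : a < b) (hcd : c < d) (hs : s ∈ Set.Ioo 0 1)
    (ht : t ∈ Set.Ioo 0 1) (h : semicircle upper a b s = semicircle upper' c d t) :
    upper = upper' ∧
      (a = c ∧ b = d ∨ a < c ∧ c < b ∧ b < d ∨ c < a ∧ a < d ∧ d < b) := by
  obtain ⟨⟨hax, hxb⟩, hsign, habxy⟩ := semicircle_spec hab hs (Prod.mk.eta).symm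
  obtain ⟨⟨hcx, hxd⟩, hsign', hcdxy⟩ := semicircle_spec hcd ht (h.symm.trans (Prod.mk.eta).symm)
  set x := (semicircle upper a b s).1
  set y := (semicircle upper a b s).2
  have hpower : (x - a) * (b - x) = (x - c) * (d - x) := habxy.symm.trans hcdxy
  refine ⟨?_, ?_⟩
  · cases upper <;> cases upper' <;> grind
  · rcases lt_trichotomy a c with hac | rfl | hca
    · have : b < d := by nlinarith
      exact Or.inr (Or.inl ⟨hac, by linarith, this⟩)
    · have := mul_left_cancel₀ (sub_pos.2 hax).ne' hpower
      exact Or.inl ⟨rfl, by linarith⟩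
    · have : d < b := by nlinarith
      exact Or.inr (Or.inr ⟨hca, by linarith, this⟩)

end Semicircle

section BookEmbedding

variable {V : Type*}

theorem edge_eq_of_semicircles_meet {pos : V → ℝ} (hpos : Function.Injective pos)
    {G : Bool → SimpleGraph V} (hG : ∀ i, NonCrossing (InvImage (· < ·) pos) (G i))
    {i j : Bool} {a b c d : V} (hab : (G i).Adj a b) (hcd : (G j).Adj c d)
    (hab_lt : pos a < pos b) (hcd_lt : pos c < pos d) {s t : ℝ} (hs : s ∈ Set.Ioo 0 1)
    (ht : t ∈ Set.Ioo 0 1)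
    (h : semicircle i (pos a) (pos b) s = semicircle j (pos c) (pos d) t) :
    s(a, b) = s(c, d) := by
  obtain ⟨rfl, ⟨hac, hbd⟩ | ⟨hac, hcb, hbd⟩ | ⟨hca, had, hdb⟩⟩ :=
    eq_or_interleaved_of_semicircles_meet hab_lt hcd_lt hs ht h
  · rw [hpos hac, hpos hbd]
  · exact absurd hbd (hG i hab hcd hac hcb)
  · exact absurd hdb (hG i hcd hab hca had)

theorem exists_oriented_edge {pos : V → ℝ} (hpos : Function.Injective pos)
    {G : Bool → SimpleGraph V} {e : Sym2 V} (he : e ∈ (⨆ i, G i).edgeSet) :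
    ∃ i a b, e = s(a, b) ∧ (G i).Adj a b ∧ pos a < pos b := by
  induction e with
  | h a b =>
    obtain ⟨i, hab⟩ := iSup_adj.1 ((mem_edgeSet _).1 he)
    rcases lt_or_gt_of_ne (hpos.ne hab.ne) with hlt | hgt
    · exact ⟨i, a, b, rfl, hab, hlt⟩
    · exact ⟨i, b, a, Sym2.eq_swap, hab.symm, hgt⟩

theorem isPlanar_iSup_of_nonCrossing {pos : V → ℝ} (hpos : Function.Injective pos)
    {G : Bool → SimpleGraph V} (hG : ∀ i, NonCrossing (InvImage (· < ·) pos) (G i)) :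
    IsPlanar (⨆ i, G i) := by
  choose page a b he hadj hlt using fun e : (⨆ i, G i).edgeSet => exists_oriented_edge hpos e.2
  let f (v : V) : ℝ × ℝ := (pos v, 0)
  let γ (e : (⨆ i, G i).edgeSet) (t : Set.Icc (0 : ℝ) 1) : ℝ × ℝ :=
    semicircle (page e) (pos (a e)) (pos (b e)) t
  have hinterior (e) (t : Set.Icc (0 : ℝ) 1) : γ e t ∈ Set.range f ∨ (t : ℝ) ∈ Set.Ioo 0 1 := by
    rcases Set.eq_endpoints_or_mem_Ioo_of_mem_Icc t.2 with h | h | h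
    · exact Or.inl ⟨a e, by simp only [γ, f, h, semicircle_zero]⟩
    · exact Or.inl ⟨b e, by simp only [γ, f, h, semicircle_one]⟩
    · exact Or.inr h
  refine ⟨f, γ, fun v w h => hpos (congrArg Prod.fst h),
    fun e => continuous_semicircle.comp continuous_subtype_val,
    fun e => ⟨a e, b e, he e, semicircle_zero, semicircle_one⟩,
    fun e => (semicircle_injective (hlt e).ne).comp Subtype.val_injective,
    fun e t ht0 ht1 v h => ?_, fun e e' hne s t h => ?_⟩
  · have ht : (t : ℝ) ∈ Set.Ioo 0 1 := ⟨t.2.1.lt_of_ne' ht0, t.2.2.lt_of_ne ht1⟩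
    have hy := (semicircle_spec (hlt e) ht h).2.1
    exact hy.ne' (mul_zero _)
  · rcases hinterior e s with hs | hs
    · exact hs
    rcases hinterior e' t with ht | ht
    · exact h ▸ ht
    have := edge_eq_of_semicircles_meet hpos hG (hadj e) (hadj e') (hlt e) (hlt e') hs ht h
    exact absurd (Subtype.ext (by rw [he e, he e', this])) hne

theorem isPlanar_sup_of_nonCrossing {α : Type*} [Countable V] [LinearOrder α] {pos : V → α}
    (hpos : Function.Injective pos) {G₁ G₂ : SimpleGraph V}
    (h₁ : NonCrossing (InvImage (· < ·) pos) G₁) (h₂ : NonCrossing (InvImage (· < ·) pos) G₂) :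
    IsPlanar (G₁ ⊔ G₂) := by
  have : Countable (Set.range pos) := (Set.countable_range pos).to_subtype
  obtain ⟨ι⟩ := Order.embedding_from_countable_to_dense (Set.range pos) ℝ
  let realPos (v : V) : ℝ := ι ⟨pos v, v, rfl⟩
  have hlt (v w : V) : InvImage (· < ·) realPos v w ↔ InvImage (· < ·) pos v w :=
    ι.lt_iff_lt
  have hreal : Function.Injective realPos := fun v w h =>
    hpos (congrArg Subtype.val (ι.injective h))
  rw [sup_eq_iSup]
  refine isPlanar_iSup_of_nonCrossing hreal fun i => ?_
  cases i
  · exact h₂.comap (f := id) fun v w => (hlt v w).1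
  · exact h₁.comap (f := id) fun v w => (hlt v w).1

end BookEmbedding

/-! ### Planar decompositions -/

theorem IsPlanar.comap {V W : Type*} {G : SimpleGraph W} (hG : IsPlanar G) {φ : V → W}
    (hφ : Function.Injective φ) : IsPlanar (G.comap φ) := by
  obtain ⟨f, γ, hf, hcont, hends, hinj, havoid, hmeet⟩ := hG
  let ψ : (G.comap φ).edgeSet → G.edgeSet := (Hom.comap φ G).mapEdgeSet
  have hψ : Function.Injective ψ := Hom.mapEdgeSet.injective _ hφ
  have hends' (e : (G.comap φ).edgeSet) : ∃ a b : V, (e : Sym2 V) = s(a, b) ∧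
      γ (ψ e) ⟨0, by norm_num⟩ = f (φ a) ∧ γ (ψ e) ⟨1, by norm_num⟩ = f (φ b) := by
    obtain ⟨u, v, huv, hu, hv⟩ := hends (ψ e)
    obtain ⟨e, he⟩ := e
    induction e with | h a b => ?_
    rcases Sym2.eq_iff.1 (show s(φ a, φ b) = s(u, v) from huv) with ⟨rfl, rfl⟩ | ⟨rfl, rfl⟩
    · exact ⟨a, b, rfl, hu, hv⟩
    · exact ⟨b, a, Sym2.eq_swap, hu, hv⟩
  refine ⟨f ∘ φ, γ ∘ ψ, hf.comp hφ, fun e => hcont _, hends', fun e => hinj _,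
    fun e t h0 h1 v => havoid _ t h0 h1 _, fun e e' hne s t h => ?_⟩
  obtain ⟨w, hw⟩ := hmeet _ _ (hψ.ne hne) s t h
  obtain ⟨a, b, -, ha, hb⟩ := hends' e
  by_cases h0 : s = ⟨0, by norm_num⟩
  · exact ⟨a, by rw [h0]; exact ha.symm⟩
  by_cases h1 : s = ⟨1, by norm_num⟩
  · exact ⟨b, by rw [h1]; exact hb.symm⟩
  exact absurd hw.symm (havoid _ s (fun h => h0 (Subtype.ext h)) (fun h => h1 (Subtype.ext h)) w)

/-- `G` is the union of `n` planar subgraphs, that is, its thickness is at most `n`. -/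
def HasPlanarDecomposition {V : Type*} (G : SimpleGraph V) (n : ℕ) : Prop :=
  ∃ H : Fin n → SimpleGraph V, (∀ i, H i ≤ G) ∧ (∀ i, IsPlanar (H i)) ∧ (⨆ i, H i) = G

theorem HasPlanarDecomposition.comap {V W : Type*} {G : SimpleGraph W} {n : ℕ}
    (hG : HasPlanarDecomposition G n) {φ : V → W} (hφ : Function.Injective φ) :
    HasPlanarDecomposition (G.comap φ) n := by
  obtain ⟨H, hle, hplanar, hsup⟩ := hG
  refine ⟨fun i => (H i).comap φ, fun i _ _ h => hle i h,
    fun i => (hplanar i).comap hφ, ?_⟩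
  ext y z
  simp only [← hsup, iSup_adj, comap_adj]

/-! ### Blow-ups of a template -/

section BlowUp

variable {V S : Type*}

/-- The graph in which every `a` is joined to the members of the list `star a`. -/
def graphOfStars (star : S → List S) : SimpleGraph S :=
  fromRel fun a b => b ∈ star a

instance [DecidableEq S] (star : S → List S) : DecidableRel (graphOfStars star).Adj :=
  inferInstanceAs (DecidableRel (fromRel _).Adj)

/-- The position on the spine of a vertex of a blow-up: vertices are sorted by the level of their
site, ties being broken by `key`. -/
def blowUpPos (level : S → ℕ) (key : V → ℕ) (site : V → S) (x : V) : ℕ ×ₗ ℕ :=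
  toLex (level (site x), key x)

/-- In a blow-up where only the sites `a` with `multi a` may receive several vertices, and sites of
equal level are interleaved, some vertex at `a` may come before some vertex at `b`. -/
def MayPrecede (level : S → ℕ) (multi : S → Bool) (a b : S) : Prop :=
  level a < level b ∨ level a = level b ∧ (a = b → multi a)

instance [DecidableEq S] (level : S → ℕ) (multi : S → Bool) :
    DecidableRel (MayPrecede level multi) :=
  fun _ _ => inferInstanceAs (Decidable (_ ∨ _))

theorem blowUpPos_injective {level : S → ℕ} {key : V → ℕ} {site : V → S}
    (hkey : Function.Injective key) : Function.Injective (blowUpPos level key site) :=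
  fun _ _ h => hkey (congrArg Prod.snd (toLex.injective h))

theorem NonCrossing.blowUp {level : S → ℕ} {multi : S → Bool} {key : V → ℕ} {site : V → S}
    {G : SimpleGraph S} (hsite : ∀ x y, site x = site y → multi (site x) ∨ x = y)
    (hG : NonCrossing (MayPrecede level multi) G) :
    NonCrossing (InvImage (· < ·) (blowUpPos level key site)) (G.comap site) := by
  refine hG.comap fun x y hxy => ?_
  rcases Prod.Lex.toLex_lt_toLex.1 hxy with hlevel | ⟨hlevel, hkey⟩
  · exact Or.inl hlevel
  · exact Or.inr ⟨hlevel, fun h => (hsite x y h).resolve_right fun e => hkey.ne (congrArg key e)⟩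

end BlowUp

/-! ### The layers of `K_{2,4p+1,4p+1}` -/

/-- The vertices of `K_{2,4p+1,4p+1}`: two vertices `x`, and on each of the two large sides `u`
and `v` a last vertex together with `p` quadruples, `u a j` being the member `a` of the
quadruple `j`. -/
inductive Vertex (p : ℕ)
  | x (i : Fin 2)
  | uLast
  | vLast
  | u (a : Fin 4) (j : Fin p)
  | v (a : Fin 4) (j : Fin p)

/-- The sites of the template of the layer of a quadruple `r`: `u₀`, …, `v₃` are the members of
that quadruple, `U₀₁` is the site of all members `0` and `1` of other quadruples on the side `u`,
and so on, except that `w` is the member `3` on the side `v` of the quadruple `r + 1`. -/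
inductive LayerSite
  | x₀ | x₁ | uLast | vLast | u₀ | u₁ | u₂ | u₃ | v₀ | v₁ | v₂ | v₃ | U₀₁ | U₂₃ | V₀₁ | V₂₃ | w
  deriving DecidableEq

namespace LayerSite

instance : Fintype LayerSite where
  elems := {x₀, x₁, uLast, vLast, u₀, u₁, u₂, u₃, v₀, v₁, v₂, v₃, U₀₁, U₂₃, V₀₁, V₂₃, w}
  complete a := by cases a <;> decide

/-- The sites that may hold several vertices of the blow-up. -/
def multi : LayerSite → Bool
  | U₀₁ | U₂₃ | V₀₁ | V₂₃ => true
  | _ => false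

/-- The rank of a site along the spine. -/
def level : LayerSite → ℕ
  | u₂ => 0 | uLast => 1 | U₂₃ => 2 | u₃ => 3 | v₁ => 4 | x₀ => 5 | w => 6 | V₂₃ => 7 | v₃ => 8
  | U₀₁ => 9 | u₀ => 10 | vLast => 11 | V₀₁ => 12 | u₁ => 13 | v₂ => 14 | x₁ => 15 | v₀ => 16

/-- The edges of the template drawn above the spine, each listed at one of its ends. -/
def upperStar : LayerSite → List LayerSite
  | v₀ => [u₂, u₃, U₂₃, uLast, x₁]
  | u₃ => [v₂, v₃, V₂₃, w, x₀, x₁]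
  | v₃ => [u₀, u₁, U₀₁]
  | u₁ => [V₀₁, vLast]
  | _ => []

/-- The edges of the template drawn below the spine, each listed at one of its ends. -/
def lowerStar : LayerSite → List LayerSite
  | v₁ => [u₂, u₃, U₂₃, uLast, x₀]
  | u₂ => [v₂, v₃, V₂₃, w, x₀, x₁]
  | v₂ => [u₀, u₁, U₀₁, x₁]
  | u₀ => [V₀₁, vLast]
  | x₀ => [w]
  | _ => []

theorem nonCrossing_upper : NonCrossing (MayPrecede level multi) (graphOfStars upperStar) := by
  unfold NonCrossing; decide

theorem nonCrossing_lower : NonCrossing (MayPrecede level multi) (graphOfStars lowerStar) := by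
  unfold NonCrossing; decide

/-- The part of `K_{2,4p+1,4p+1}` containing the vertices at a site. -/
def part : LayerSite → Fin 3
  | x₀ | x₁ => 0
  | uLast | u₀ | u₁ | u₂ | u₃ | U₀₁ | U₂₃ => 1
  | vLast | v₀ | v₁ | v₂ | v₃ | V₀₁ | V₂₃ | w => 2

/-- The template: its edges above and below the spine together. -/
def graph : SimpleGraph LayerSite := graphOfStars upperStar ⊔ graphOfStars lowerStar

instance : DecidableRel graph.Adj := inferInstanceAs (DecidableRel (_ ⊔ _ : SimpleGraph _).Adj)

theorem graph_le : graph ≤ (⊤ : SimpleGraph (Fin 3)).comap part := by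
  intro a b
  revert a b
  decide

end LayerSite

/-- The sites of the template of the rest layer: `U₀₁` is the site of the members `0` and `1` of all
quadruples on the side `u`, and so on, except that `w` is the member `3` on the side `v` of the
quadruple `0`. -/
inductive RestSite
  | x₀ | x₁ | uLast | vLast | U₀₁ | U₂₃ | V₀ | V₁ | V₂ | V₃ | w
  deriving DecidableEq

namespace RestSite

instance : Fintype RestSite where
  elems := {x₀, x₁, uLast, vLast, U₀₁, U₂₃, V₀, V₁, V₂, V₃, w}
  complete a := by cases a <;> decide

/-- The sites that may hold several vertices of the blow-up. -/
def multi : RestSite → Bool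
  | U₀₁ | U₂₃ | V₀ | V₁ | V₂ | V₃ => true
  | _ => false

/-- The rank of a site along the spine; vertices at sites of equal level are interleaved. -/
def level : RestSite → ℕ
  | x₀ => 0 | U₀₁ | V₀ | V₁ => 1 | vLast => 2 | U₂₃ => 3 | V₃ => 4 | uLast => 5 | V₂ => 6 | w => 7
  | x₁ => 8

/-- The edges of the template drawn above the spine, each listed at one of its ends. -/
def upperStar : RestSite → List RestSite
  | x₀ => [U₀₁, V₀, V₂, w, uLast, vLast]
  | vLast => [U₂₃, uLast]
  | uLast => [V₃]
  | _ => []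

/-- The edges of the template drawn below the spine, each listed at one of its ends. -/
def lowerStar : RestSite → List RestSite
  | x₁ => [U₀₁, V₁, V₃, w, uLast, vLast]
  | uLast => [V₂, w]
  | _ => []

theorem nonCrossing_upper : NonCrossing (MayPrecede level multi) (graphOfStars upperStar) := by
  unfold NonCrossing; decide

theorem nonCrossing_lower : NonCrossing (MayPrecede level multi) (graphOfStars lowerStar) := by
  unfold NonCrossing; decide

/-- The part of `K_{2,4p+1,4p+1}` containing the vertices at a site. -/
def part : RestSite → Fin 3
  | x₀ | x₁ => 0
  | uLast | U₀₁ | U₂₃ => 1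
  | vLast | V₀ | V₁ | V₂ | V₃ | w => 2

/-- The template: its edges above and below the spine together. -/
def graph : SimpleGraph RestSite := graphOfStars upperStar ⊔ graphOfStars lowerStar

instance : DecidableRel graph.Adj := inferInstanceAs (DecidableRel (_ ⊔ _ : SimpleGraph _).Adj)

theorem graph_le : graph ≤ (⊤ : SimpleGraph (Fin 3)).comap part := by
  intro a b
  revert a b
  decide

end RestSite

namespace Vertex

variable {p : ℕ}

/-- The part of `K_{2,4p+1,4p+1}` containing a vertex. -/
def part : Vertex p → Fin 3
  | x _ => 0
  | uLast | u _ _ => 1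
  | vLast | v _ _ => 2

/-- The order on the spine of the vertices at the same level. For each `j` it makes `u 0 j`,
`v 0 j`, `v 1 j`, `u 1 j` consecutive, which the 4-cycles of the rest layer require. -/
def key : Vertex p → ℕ
  | x i => i
  | uLast => 2
  | vLast => 3
  | u a j => 8 * j + ![4, 7, 8, 9] a
  | v a j => 8 * j + ![5, 6, 10, 11] a

theorem key_injective : Function.Injective (key : Vertex p → ℕ) := by
  rintro (i | _ | _ | ⟨a, j⟩ | ⟨a, j⟩) (i' | _ | _ | ⟨a', j'⟩ | ⟨a', j'⟩) h <;>
    (try fin_cases a) <;> (try fin_cases a') <;>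
    simp only [key, Fin.zero_eta, Fin.mk_one, Fin.reduceFinMk, Matrix.cons_val] at h <;> grind

/-- The site of a vertex in the template of the layer of the quadruple `r`. -/
def layerSite (r : Fin p) : Vertex p → LayerSite
  | x i => ![.x₀, .x₁] i
  | uLast => .uLast
  | vLast => .vLast
  | u a j => if j = r then ![.u₀, .u₁, .u₂, .u₃] a else ![.U₀₁, .U₀₁, .U₂₃, .U₂₃] a
  | v a j =>
    if j = r then ![.v₀, .v₁, .v₂, .v₃] a
    else if a = 3 ∧ (j : ℕ) = r + 1 then .w else ![.V₀₁, .V₀₁, .V₂₃, .V₂₃] a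

/-- The site of a vertex in the template of the rest layer. -/
def restSite : Vertex p → RestSite
  | x i => ![.x₀, .x₁] i
  | uLast => .uLast
  | vLast => .vLast
  | u a _ => ![.U₀₁, .U₀₁, .U₂₃, .U₂₃] a
  | v a j => if a = 3 ∧ (j : ℕ) = 0 then .w else ![.V₀, .V₁, .V₂, .V₃] a

theorem eq_of_layerSite_eq (r : Fin p) (y z : Vertex p) (h : layerSite r y = layerSite r z) :
    (layerSite r y).multi ∨ y = z := by
  rcases y with i | _ | _ | ⟨a, j⟩ | ⟨a, j⟩ <;> rcases z with i' | _ | _ | ⟨b, k⟩ | ⟨b, k⟩ <;>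
    (try fin_cases i) <;> (try fin_cases i') <;> (try fin_cases a) <;> (try fin_cases b) <;>
    simp only [layerSite, Fin.zero_eta, Fin.mk_one, Fin.reduceFinMk, Matrix.cons_val] at h ⊢ <;>
    grind [LayerSite.multi]

theorem eq_of_restSite_eq (y z : Vertex p) (h : restSite y = restSite z) :
    (restSite y).multi ∨ y = z := by
  rcases y with i | _ | _ | ⟨a, j⟩ | ⟨a, j⟩ <;> rcases z with i' | _ | _ | ⟨b, k⟩ | ⟨b, k⟩ <;>
    (try fin_cases i) <;> (try fin_cases i') <;> (try fin_cases a) <;> (try fin_cases b) <;>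
    simp only [restSite, Fin.zero_eta, Fin.mk_one, Fin.reduceFinMk, Matrix.cons_val] at h ⊢ <;>
    grind [RestSite.multi]

theorem part_layerSite (r : Fin p) (y : Vertex p) : (layerSite r y).part = part y := by
  rcases y with i | _ | _ | ⟨a, j⟩ | ⟨a, j⟩
  · fin_cases i <;> rfl
  · rfl
  · rfl
  · fin_cases a <;> simp only [layerSite] <;> split_ifs <;> rfl
  · fin_cases a <;> simp only [layerSite] <;> split_ifs <;> rfl

theorem part_restSite (y : Vertex p) : (restSite y).part = part y := by
  rcases y with i | _ | _ | ⟨a, j⟩ | ⟨a, j⟩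
  · fin_cases i <;> rfl
  · rfl
  · rfl
  · fin_cases a <;> rfl
  · fin_cases a <;> simp only [restSite] <;> split_ifs <;> rfl

/-- The complete tripartite graph `K_{2,4p+1,4p+1}` on the vertex type `Vertex p`. -/
def tripartite (p : ℕ) : SimpleGraph (Vertex p) := (⊤ : SimpleGraph (Fin 3)).comap part

/-- For each quadruple `j`, the two edges joining `v b j` to `u 0 j` and `u 1 j`. Those for `b = 0`
and those for `b = 1` together form the 4-cycles of the rest layer. -/
def cherries (p : ℕ) (b : Fin 4) : SimpleGraph (Vertex p) :=
  fromRel fun y z => ∃ j, y = v b j ∧ (z = u 0 j ∨ z = u 1 j)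

/-- The planar layer of the quadruple `r`, a blow-up of `LayerSite.graph`. -/
def layer (r : Fin p) : SimpleGraph (Vertex p) := LayerSite.graph.comap (layerSite r)

/-- The page of the rest layer made of a blow-up of the edges in `star` and of the 4-cycle edges at
the vertices `v b j`. -/
def restPage (p : ℕ) (star : RestSite → List RestSite) (b : Fin 4) : SimpleGraph (Vertex p) :=
  (graphOfStars star).comap restSite ⊔ cherries p b

/-- The planar layer that collects the edges missing from all the layers `layer r`. -/
def restLayer (p : ℕ) : SimpleGraph (Vertex p) :=
  restPage p RestSite.upperStar 0 ⊔ restPage p RestSite.lowerStar 1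

theorem layer_le (r : Fin p) : layer r ≤ tripartite p := by
  intro y z h
  simpa [tripartite, part_layerSite] using LayerSite.graph_le h

theorem cherries_le (b : Fin 4) : cherries p b ≤ tripartite p := by
  rintro y z ⟨-, ⟨j, rfl, rfl | rfl⟩ | ⟨j, rfl, rfl | rfl⟩⟩ <;> simp [tripartite, part]

theorem restPage_le {star : RestSite → List RestSite} (h : graphOfStars star ≤ RestSite.graph)
    (b : Fin 4) : restPage p star b ≤ tripartite p := by
  refine sup_le (fun y z hyz => ?_) (cherries_le b)
  simpa [tripartite, part_restSite] using RestSite.graph_le (h hyz)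

theorem restLayer_le : restLayer p ≤ tripartite p :=
  sup_le (restPage_le le_sup_left 0) (restPage_le le_sup_right 1)

/-- The union of the `p + 1` layers. -/
def layerUnion (p : ℕ) : SimpleGraph (Vertex p) := restLayer p ⊔ ⨆ r, layer r

theorem layerUnion_adj_of_restSite {y z : Vertex p}
    (h : RestSite.graph.Adj (restSite y) (restSite z)) : (layerUnion p).Adj y z :=
  Or.inl (h.imp Or.inl Or.inl)

theorem layerUnion_adj_of_layerSite {y z : Vertex p} (r : Fin p)
    (h : LayerSite.graph.Adj (layerSite r y) (layerSite r z)) : (layerUnion p).Adj y z :=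
  Or.inr (iSup_adj.2 ⟨r, h⟩)

theorem restSite_v (b : Fin 4) (k : Fin p) :
    restSite (v b k) = ![.V₀, .V₁, .V₂, .V₃] b ∨ b = 3 ∧ restSite (v b k) = .w := by
  grind [restSite]

theorem layerSite_v_of_ne {r k : Fin p} (b : Fin 4) (h : k ≠ r) :
    layerSite r (v b k) = ![.V₀₁, .V₀₁, .V₂₃, .V₂₃] b ∨ b = 3 ∧ layerSite r (v b k) = .w := by
  grind [layerSite]

theorem layerUnion_adj_x_u (i : Fin 2) (a : Fin 4) (j : Fin p) :
    (layerUnion p).Adj (x i) (u a j) := by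
  by_cases ha : a < 2
  · apply layerUnion_adj_of_restSite
    simp only [restSite]
    decide +revert
  · apply layerUnion_adj_of_layerSite j
    simp only [layerSite, if_true]
    decide +revert

theorem layerUnion_adj_x₀_v_three : ∀ k : Fin p, (layerUnion p).Adj (x 0) (v 3 k)
  | ⟨0, _⟩ => layerUnion_adj_of_restSite (by simp only [restSite]; decide)
  | ⟨r + 1, hr⟩ => by
    let j : Fin p := ⟨r, by omega⟩
    have hw : layerSite j (v 3 ⟨r + 1, hr⟩) = .w := by simp [layerSite, j]
    apply layerUnion_adj_of_layerSite j
    rw [hw]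
    simp only [layerSite]
    decide

theorem layerUnion_adj_x_v (i : Fin 2) (b : Fin 4) (k : Fin p) :
    (layerUnion p).Adj (x i) (v b k) := by
  by_cases hw : i = 0 ∧ b = 3
  · rw [hw.1, hw.2]
    exact layerUnion_adj_x₀_v_three k
  by_cases hrest : i = 0 ∧ b ∈ [0, 2] ∨ i = 1 ∧ b ∈ [1, 3]
  · apply layerUnion_adj_of_restSite
    rcases restSite_v b k with h | ⟨rfl, h⟩ <;> rw [h] <;> simp only [restSite] <;> clear h <;>
      decide +revert
  · apply layerUnion_adj_of_layerSite k
    simp only [layerSite, if_true]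
    decide +revert

theorem layerUnion_adj_u_v (a b : Fin 4) (j k : Fin p) : (layerUnion p).Adj (u a j) (v b k) := by
  by_cases hjk : j = k
  · subst hjk
    by_cases hab : a < 2 ∧ b < 2
    · fin_cases a <;> fin_cases b <;> simp [layerUnion, restLayer, restPage, cherries] at hab ⊢
    · apply layerUnion_adj_of_layerSite j
      simp only [layerSite, if_true]
      decide +revert
  · by_cases hab : (2 ≤ a) ↔ (2 ≤ b)
    · apply layerUnion_adj_of_layerSite j
      rcases layerSite_v_of_ne b (Ne.symm hjk) with h | ⟨rfl, h⟩ <;> rw [h] <;>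
        simp only [layerSite, if_true] <;> clear h hjk <;> decide +revert
    · apply layerUnion_adj_of_layerSite k
      simp only [layerSite, if_true, if_neg hjk]
      clear hjk
      decide +revert

theorem layerUnion_adj_uLast_v (b : Fin 4) (k : Fin p) :
    (layerUnion p).Adj uLast (v b k) := by
  by_cases hb : b < 2
  · apply layerUnion_adj_of_layerSite k
    simp only [layerSite, if_true]
    decide +revert
  · apply layerUnion_adj_of_restSite
    rcases restSite_v b k with h | ⟨rfl, h⟩ <;> rw [h] <;> simp only [restSite] <;> clear h <;>
      decide +revert

theorem layerUnion_adj_u_vLast (a : Fin 4) (j : Fin p) :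
    (layerUnion p).Adj (u a j) vLast := by
  by_cases ha : a < 2
  · apply layerUnion_adj_of_layerSite j
    simp only [layerSite, if_true]
    decide +revert
  · apply layerUnion_adj_of_restSite
    simp only [restSite]
    decide +revert

theorem layerUnion_adj_of_part_lt {y z : Vertex p} (h : part y < part z) :
    (layerUnion p).Adj y z := by
  match y, z with
  | x i, uLast | x i, vLast | uLast, vLast =>
    exact layerUnion_adj_of_restSite (by clear h; simp only [restSite]; decide +revert)
  | x i, u a j => exact layerUnion_adj_x_u i a j
  | x i, v b k => exact layerUnion_adj_x_v i b k
  | uLast, v b k => exact layerUnion_adj_uLast_v b k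
  | u a j, vLast => exact layerUnion_adj_u_vLast a j
  | u a j, v b k => exact layerUnion_adj_u_v a b j k

theorem layerUnion_eq : layerUnion p = tripartite p := by
  refine le_antisymm (sup_le restLayer_le (iSup_le layer_le)) fun y z h => ?_
  rcases lt_or_gt_of_ne h with hlt | hgt
  · exact layerUnion_adj_of_part_lt hlt
  · exact (layerUnion_adj_of_part_lt hgt).symm

/-- The position of a vertex on the spine in the drawing of the rest layer. -/
def restPos : Vertex p → ℕ ×ₗ ℕ := blowUpPos RestSite.level key restSite

theorem level_restSite_of_cherries_adj {b : Fin 4} (hb : b < 2) {y z : Vertex p}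
    (h : (cherries p b).Adj y z) :
    (restSite y).level = 1 ∧ (restSite z).level = 1 := by
  rcases h with ⟨-, ⟨j, rfl, rfl | rfl⟩ | ⟨j, rfl, rfl | rfl⟩⟩ <;>
      fin_cases b <;> simp [restSite, RestSite.level] at hb ⊢

theorem eq_of_level_restSite_eq_one {t : Vertex p} (h : (restSite t).level = 1) :
    ∃ j, t = u 0 j ∨ t = u 1 j ∨ t = v 0 j ∨ t = v 1 j := by
  rcases t with i | _ | _ | ⟨a, j⟩ | ⟨a, j⟩
  · fin_cases i <;> cases h
  · cases h
  · cases h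
  · refine ⟨j, ?_⟩
    fin_cases a <;> first | (simp; done) | cases h
  · refine ⟨j, ?_⟩
    rcases restSite_v a j with h' | ⟨-, h'⟩ <;> rw [h'] at h
    · fin_cases a <;> first | (simp; done) | cases h
    · cases h

theorem eq_v_of_between_cherry {b c : Fin 4} (hbc : b = 0 ∧ c = 1 ∨ b = 1 ∧ c = 0)
    {y z t : Vertex p} (hyz : (cherries p b).Adj y z)
    (hyt : restPos y < restPos t) (htz : restPos t < restPos z) : ∃ j, t = v c j := by
  obtain ⟨hy, hz⟩ := level_restSite_of_cherries_adj (by omega) hyz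
  simp only [restPos, blowUpPos, Prod.Lex.toLex_lt_toLex, hy, hz] at hyt htz
  obtain ⟨k, ht⟩ := eq_of_level_restSite_eq_one (t := t) (by omega)
  have hyt : key y < key t := by omega
  have htz : key t < key z := by omega
  refine ⟨k, ?_⟩
  rcases hyz with ⟨-, ⟨j, rfl, rfl | rfl⟩ | ⟨j, rfl, rfl | rfl⟩⟩ <;>
    rcases hbc with ⟨rfl, rfl⟩ | ⟨rfl, rfl⟩ <;>
    rcases ht with rfl | rfl | rfl | rfl <;>
    first | rfl | (simp only [key, Matrix.cons_val] at hyt htz; omega)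

theorem not_restPage_adj_v {star : RestSite → List RestSite} {b c : Fin 4}
    (hbc : b = 0 ∧ c = 1 ∨ b = 1 ∧ c = 0)
    (hc : ∀ s, ¬ (graphOfStars star).Adj (![.V₀, .V₁, .V₂, .V₃] c) s) (j : Fin p) (z : Vertex p) :
    ¬ (restPage p star b).Adj (v c j) z := by
  rintro (h | ⟨-, ⟨k, h, -⟩ | ⟨k, rfl, h | h⟩⟩)
  · rw [comap_adj] at h
    have hsite : restSite (v c j) = ![.V₀, .V₁, .V₂, .V₃] c := by
      rcases hbc with ⟨rfl, rfl⟩ | ⟨rfl, rfl⟩ <;> rfl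
    exact hc _ (hsite ▸ h)
  all_goals grind

theorem nonCrossing_restPage {star : RestSite → List RestSite} {b c : Fin 4}
    (hbc : b = 0 ∧ c = 1 ∨ b = 1 ∧ c = 0)
    (hc : ∀ s, ¬ (graphOfStars star).Adj (![.V₀, .V₁, .V₂, .V₃] c) s)
    (hstar : NonCrossing (MayPrecede RestSite.level RestSite.multi) (graphOfStars star)) :
    NonCrossing (InvImage (· < ·) restPos) (restPage p star b) := by
  refine (hstar.blowUp eq_of_restSite_eq).sup_of_isolated_between fun y z t hyz hyt htz => ?_
  obtain ⟨j, rfl⟩ := eq_v_of_between_cherry hbc hyz hyt htz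
  exact not_restPage_adj_v hbc hc j

theorem nonCrossing_restPage_upper :
    NonCrossing (InvImage (· < ·) restPos) (restPage p RestSite.upperStar 0) :=
  nonCrossing_restPage (.inl ⟨rfl, rfl⟩) (by decide) RestSite.nonCrossing_upper

theorem nonCrossing_restPage_lower :
    NonCrossing (InvImage (· < ·) restPos) (restPage p RestSite.lowerStar 1) :=
  nonCrossing_restPage (.inr ⟨rfl, rfl⟩) (by decide) RestSite.nonCrossing_lower

instance : Countable (Vertex p) := key_injective.countable

theorem isPlanar_layer (r : Fin p) : IsPlanar (layer r) :=
  isPlanar_sup_of_nonCrossing (blowUpPos_injective key_injective)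
    (LayerSite.nonCrossing_upper.blowUp (eq_of_layerSite_eq r))
    (LayerSite.nonCrossing_lower.blowUp (eq_of_layerSite_eq r))

theorem isPlanar_restLayer : IsPlanar (restLayer p) :=
  isPlanar_sup_of_nonCrossing (blowUpPos_injective key_injective)
    nonCrossing_restPage_upper nonCrossing_restPage_lower

theorem hasPlanarDecomposition_tripartite (p : ℕ) :
    HasPlanarDecomposition (tripartite p) (p + 1) := by
  refine ⟨Fin.cons (restLayer p) layer, Fin.cases restLayer_le layer_le,
    Fin.cases isPlanar_restLayer isPlanar_layer, ?_⟩
  rw [← layerUnion_eq]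
  ext y z
  simp [layerUnion, iSup_adj, Fin.exists_fin_succ]

/-- The side `u`, with `none` standing for its last vertex. -/
def uSide : Option (Fin 4 × Fin p) → Vertex p
  | none => uLast
  | some (a, j) => u a j

/-- The side `v`, with `none` standing for its last vertex. -/
def vSide : Option (Fin 4 × Fin p) → Vertex p
  | none => vLast
  | some (b, k) => v b k

theorem uSide_injective : Function.Injective (uSide (p := p)) := by
  rintro (_ | s) (_ | t) h <;> grind [uSide]

theorem vSide_injective : Function.Injective (vSide (p := p)) := by
  rintro (_ | s) (_ | t) h <;> grind [vSide]

theorem part_uSide (s : Option (Fin 4 × Fin p)) : part (uSide s) = 1 := by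
  cases s <;> rfl

theorem part_vSide (s : Option (Fin 4 × Fin p)) : part (vSide s) = 2 := by
  cases s <;> rfl

/-- The splitting of a large side into its last vertex and `p` quadruples. -/
def indexEquiv (p : ℕ) : Fin (4 * p + 1) ≃ Option (Fin 4 × Fin p) :=
  finSuccEquivLast.trans (Equiv.optionCongr finProdFinEquiv.symm)

/-- The identification of the vertices of `K_{2,4p+1,4p+1}`, as a disjoint union of three parts,
with `Vertex p`. -/
def label (p : ℕ) : (Σ i, ![Fin 2, Fin (4 * p + 1), Fin (4 * p + 1)] i) → Vertex p
  | ⟨0, i⟩ => x i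
  | ⟨1, m⟩ => uSide (indexEquiv p m)
  | ⟨2, m⟩ => vSide (indexEquiv p m)

theorem part_label : ∀ y, part (label p y) = y.1
  | ⟨0, _⟩ => rfl
  | ⟨1, _⟩ => part_uSide _
  | ⟨2, _⟩ => part_vSide _

theorem label_injective (p : ℕ) : Function.Injective (label p) := by
  rintro ⟨i, y⟩ ⟨i', z⟩ h
  obtain rfl : i = i' := by simpa only [part_label] using congrArg part h
  congr 1
  fin_cases i
  · exact Vertex.x.inj h
  · exact (indexEquiv p).injective (uSide_injective h)
  · exact (indexEquiv p).injective (vSide_injective h)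

theorem tripartite_comap_label : (tripartite p).comap (label p) =
    completeMultipartiteGraph ![Fin 2, Fin (4 * p + 1), Fin (4 * p + 1)] := by
  ext y z
  simp [tripartite, part_label]

end Vertex

theorem planar_decomposition_K2_4p1 (p : ℕ) :
    (∃ H : Fin (p + 1) → SimpleGraph (Σ i, ![Fin 2, Fin (4 * p + 1), Fin (4 * p + 1)] i),
      (∀ i, H i ≤ completeMultipartiteGraph ![Fin 2, Fin (4 * p + 1), Fin (4 * p + 1)]) ∧
      (∀ i, IsPlanar (H i)) ∧
      (⨆ i, H i) = completeMultipartiteGraph ![Fin 2, Fin (4 * p + 1), Fin (4 * p + 1)]) ∧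
    thickness (completeMultipartiteGraph ![Fin 2, Fin (4 * p + 1), Fin (4 * p + 1)]) ≤ p + 1 := by
  have h := (Vertex.hasPlanarDecomposition_tripartite p).comap (Vertex.label_injective p)
  rw [Vertex.tripartite_comap_label] at h
  exact ⟨h, Nat.sInf_le h⟩
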